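/- Let β > 1 with β ∉ ℕ, let A = {0,1,…,⌊β⌋}, r = ⌊β⌋/(β²−1), and {β} = β − ⌊β⌋. Assume {β}/2 < r < 1/2. Then no x in the open interval I = (−r/β, −{β}/(2β²)) has an optimal (−β,A)-representation. -/

import Mathlib

/-- A `(γ, B)`-representation of `x`: a sequence of digits `b i ∈ B` (here `b i` is the
digit `b_{i+1}` of the paper, i.e. sequences are 0-indexed) with `x = ∑_{i ≥ 1} b_i / γ^i`. -/
def IsRep (γ : ℝ) (B : Set ℝ) (b : ℕ → ℝ) (x : ℝ) : Prop :=
  (∀ i, b i ∈ B) ∧ HasSum (fun i : ℕ => b i / γ ^ (i + 1)) x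

/-- `J_{γ,B}`: the set of real numbers admitting a `(γ,B)`-representation. -/
def RepSet (γ : ℝ) (B : Set ℝ) : Set ℝ := {x | ∃ b, IsRep γ B b x}

/-- A `(γ,B)`-representation `c` of `x` is optimal if its partial sums approximate `x`
at least as well as those of any other `(γ,B)`-representation of `x`. -/
def IsOptimalRep (γ : ℝ) (B : Set ℝ) (c : ℕ → ℝ) (x : ℝ) : Prop :=
  IsRep γ B c x ∧ ∀ b : ℕ → ℝ, IsRep γ B b x → ∀ n : ℕ, 1 ≤ n →
    |x - ∑ i ∈ Finset.range n, c i / γ ^ (i + 1)| ≤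
      |x - ∑ i ∈ Finset.range n, b i / γ ^ (i + 1)|

/-- The digit alphabet `{0, 1, …, M}` as a set of reals. -/
def digitSet (M : ℤ) : Set ℝ := (fun k : ℤ => (k : ℝ)) '' Set.Icc 0 M

/-!
Optimality at step `n` compares the rescaled remainders `γⁿ (x - ∑_{i < n} b_i / γ^(i+1))`, and a
finite word extends to a representation of `x` as soon as its remainder lies in `J_{γ,B}`. Here
`J` contains `[-βr, r]`, an interval of length at least `1`. For `x ∈ I` the word `0` extends to a
representation of `x` with first remainder `-βx ∈ (0, 1/2)`, which forces the first digit of an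
optimal representation to be `0`. But then its second remainder is `β²x - c₁ ≤ β²x < -{β}/2`,
whereas the word `1, ⌊β⌋` also extends and has the strictly smaller remainder `β²x + {β}`.
-/

/-- The rescaled remainder `γⁿ (x - ∑_{i < n} b_i / γ^(i+1))` of `x` after `n` digits of `b`, in its
recursive form. Since the scale `γⁿ` does not depend on `b`, an optimal representation is one whose
remainders all have the least possible absolute value. -/
def repRemainder (γ : ℝ) (b : ℕ → ℝ) (x : ℝ) : ℕ → ℝ
  | 0 => x
  | n + 1 => γ * repRemainder γ b x n - b n

section Remainder

variable {γ x : ℝ} {B : Set ℝ} {b c : ℕ → ℝ}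

theorem sub_sum_eq_repRemainder_div (hγ : γ ≠ 0) (b : ℕ → ℝ) (x : ℝ) (n : ℕ) :
    x - ∑ i ∈ Finset.range n, b i / γ ^ (i + 1) = repRemainder γ b x n / γ ^ n := by
  induction n with
  | zero => simp [repRemainder]
  | succ n ih =>
    rw [Finset.sum_range_succ, ← sub_sub, ih, repRemainder]
    field_simp
    ring

theorem repRemainder_congr {n : ℕ} (h : ∀ i < n, b i = c i) :
    repRemainder γ b x n = repRemainder γ c x n := by
  induction n with
  | zero => rfl
  | succ n ih =>
    rw [repRemainder, repRemainder, ih fun i hi => h i (hi.trans n.lt_succ_self),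
      h n n.lt_succ_self]

theorem hasSum_of_abs_repRemainder_le (hγ : 1 < |γ|) {C : ℝ}
    (hC : ∀ n, |repRemainder γ b x n| ≤ C) : HasSum (fun i => b i / γ ^ (i + 1)) x := by
  have hγ0 : γ ≠ 0 := abs_pos.mp (one_pos.trans hγ)
  let f : ℕ → ℝ := fun n => repRemainder γ b x n / γ ^ n
  have hf : Summable f := by
    refine Summable.of_norm_bounded ((summable_geometric_of_lt_one (by positivity)
      (inv_lt_one_of_one_lt₀ hγ)).mul_left C) fun n => ?_
    rw [Real.norm_eq_abs, abs_div, abs_pow, inv_pow, ← div_eq_mul_inv]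
    gcongr
    exact hC n
  have telescope : ∀ i, f i - f (i + 1) = b i / γ ^ (i + 1) := fun i => by
    simp only [f, repRemainder]
    field_simp
    ring
  have hsum := hf.hasSum.sub ((hasSum_nat_add_iff' 1).mpr hf.hasSum)
  simp only [telescope] at hsum
  simpa [f, repRemainder] using hsum

theorem isRep_iff_drop (hγ : γ ≠ 0) (n : ℕ) :
    IsRep γ B b x ↔
      (∀ i < n, b i ∈ B) ∧ IsRep γ B (fun i => b (i + n)) (repRemainder γ b x n) := by
  have digits : (∀ i, b i ∈ B) ↔ (∀ i < n, b i ∈ B) ∧ ∀ i, b (i + n) ∈ B := by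
    refine ⟨fun h => ⟨fun i _ => h i, fun i => h (i + n)⟩, fun h i => ?_⟩
    rcases lt_or_ge i n with hi | hi
    · exact h.1 i hi
    · simpa [hi] using h.2 (i - n)
  have sum : HasSum (fun i => b i / γ ^ (i + 1)) x ↔
      HasSum (fun i => b (i + n) / γ ^ (i + 1)) (repRemainder γ b x n) := by
    rw [← hasSum_nat_add_iff' n, sub_sum_eq_repRemainder_div hγ,
      ← hasSum_div_const_iff (f := fun i => b (i + n) / γ ^ (i + 1)) (pow_ne_zero n hγ)]
    simp only [div_div, ← pow_add, add_right_comm]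
  rw [IsRep, IsRep, digits, sum, and_assoc]

theorem exists_isRep_of_repRemainder_mem (hγ : γ ≠ 0) {n : ℕ} (hb : ∀ i < n, b i ∈ B)
    (hx : repRemainder γ b x n ∈ RepSet γ B) :
    ∃ b', IsRep γ B b' x ∧ ∀ i < n, b' i = b i := by
  obtain ⟨t, ht⟩ := hx
  let b' : ℕ → ℝ := fun i => if i < n then b i else t (i - n)
  have hb' : ∀ i < n, b' i = b i := fun i hi => if_pos hi
  refine ⟨b', (isRep_iff_drop hγ n).mpr ⟨fun i hi => hb' i hi ▸ hb i hi, ?_⟩, hb'⟩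
  simpa [repRemainder_congr hb', b'] using ht

theorem subset_repSet_of_forall_exists_digit (hγ : 1 < |γ|) {S : Set ℝ}
    (hS : Bornology.IsBounded S) (hdigit : ∀ y ∈ S, ∃ d ∈ B, γ * y - d ∈ S) :
    S ⊆ RepSet γ B := by
  intro y hy
  choose! d hdB hdS using hdigit
  let orbit : ℕ → ℝ := fun n => (fun z => γ * z - d z)^[n] y
  have orbit_mem : ∀ n, orbit n ∈ S := fun n => Set.MapsTo.iterate hdS n hy
  have remainder_eq : ∀ n, repRemainder γ (fun i => d (orbit i)) y n = orbit n := by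
    intro n
    induction n with
    | zero => rfl
    | succ n ih => simp only [repRemainder, ih, orbit, Function.iterate_succ_apply']
  obtain ⟨C, hC⟩ := hS.exists_norm_le
  exact ⟨fun i => d (orbit i), fun i => hdB _ (orbit_mem i),
    hasSum_of_abs_repRemainder_le hγ fun n => remainder_eq n ▸ hC _ (orbit_mem n)⟩

end Remainder

namespace IsOptimalRep

variable {γ x : ℝ} {B : Set ℝ} {b c : ℕ → ℝ}

theorem abs_repRemainder_le_of_isRep (hc : IsOptimalRep γ B c x) (hγ : γ ≠ 0)
    (hb : IsRep γ B b x) (n : ℕ) : |repRemainder γ c x n| ≤ |repRemainder γ b x n| := by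
  rcases n.eq_zero_or_pos with rfl | hn
  · exact le_rfl
  · have h := hc.2 b hb n hn
    rwa [sub_sum_eq_repRemainder_div hγ, sub_sum_eq_repRemainder_div hγ, abs_div, abs_div,
      div_le_div_iff_of_pos_right (by positivity)] at h

theorem abs_repRemainder_le (hc : IsOptimalRep γ B c x) (hγ : γ ≠ 0) {n : ℕ}
    (hb : ∀ i < n, b i ∈ B) (hx : repRemainder γ b x n ∈ RepSet γ B) :
    |repRemainder γ c x n| ≤ |repRemainder γ b x n| := by
  obtain ⟨b', hb', hbb'⟩ := exists_isRep_of_repRemainder_mem hγ hb hx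
  exact repRemainder_congr (γ := γ) (x := x) hbb' ▸ hc.abs_repRemainder_le_of_isRep hγ hb' n

theorem abs_sub_digit_le (hc : IsOptimalRep γ B c x) (hγ : γ ≠ 0) {d : ℝ} (hd : d ∈ B)
    (hx : γ * x - d ∈ RepSet γ B) : |γ * x - c 0| ≤ |γ * x - d| :=
  hc.abs_repRemainder_le (n := 1) (b := fun _ => d) hγ (fun _ _ => hd) hx

theorem abs_sub_two_digits_le (hc : IsOptimalRep γ B c x) (hγ : γ ≠ 0) {d e : ℝ} (hd : d ∈ B)
    (he : e ∈ B) (hx : γ * (γ * x - d) - e ∈ RepSet γ B) :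
    |γ * (γ * x - c 0) - c 1| ≤ |γ * (γ * x - d) - e| := by
  refine hc.abs_repRemainder_le (n := 2) (b := fun i => if i = 0 then d else e) hγ
    (fun i _ => ?_) hx
  split_ifs <;> assumption

end IsOptimalRep

section IntegerDigits

variable {β γ r x : ℝ} {M : ℤ} {c : ℕ → ℝ}

theorem intCast_mem_digitSet {k : ℤ} (h0 : 0 ≤ k) (hM : k ≤ M) : (k : ℝ) ∈ digitSet M :=
  ⟨k, ⟨h0, hM⟩, rfl⟩

theorem nonneg_of_mem_digitSet {d : ℝ} (hd : d ∈ digitSet M) : 0 ≤ d := by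
  obtain ⟨k, ⟨hk, -⟩, rfl⟩ := hd
  exact Int.cast_nonneg hk

theorem IsOptimalRep.head_eq_zero (hc : IsOptimalRep γ (digitSet M) c x) (hγ : γ ≠ 0)
    (hx : γ * x ∈ RepSet γ (digitSet M)) (hlt : |γ * x| < 1 / 2) : c 0 = 0 := by
  obtain ⟨k, ⟨hk0, hkM⟩, hk⟩ := hc.1.1 0
  have hle : |γ * x - c 0| ≤ |γ * x| := by
    simpa using hc.abs_sub_digit_le hγ (intCast_mem_digitSet le_rfl (hk0.trans hkM))
      (by simpa using hx)
  have hk1 : |(k : ℝ)| < 1 := calc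
    |(k : ℝ)| = |γ * x - (γ * x - c 0)| := by rw [sub_sub_cancel, ← hk]
    _ ≤ |γ * x| + |γ * x - c 0| := abs_sub _ _
    _ < 1 := by linarith
  have hk_zero : k = 0 := Int.abs_lt_one_iff.mp (by exact_mod_cast hk1)
  simp [← hk, hk_zero]

theorem exists_digit_neg_mul_sub_mem_Icc {y : ℝ} (hβ : 1 < β) (hM : β ≤ M + 1)
    (hr : r = M / (β ^ 2 - 1)) (hy : y ∈ Set.Icc (-(β * r)) r) :
    ∃ d ∈ digitSet M, -β * y - d ∈ Set.Icc (-(β * r)) r := by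
  obtain ⟨hy₁, hy₂⟩ := hy
  have hM0 : 0 ≤ M := by
    have : (0 : ℝ) < M := by linarith
    exact_mod_cast this.le
  have hfix : β ^ 2 * r - M = r := by
    rw [hr]
    field_simp [show β ^ 2 - 1 ≠ 0 by nlinarith]
    ring
  have hlength : 1 ≤ r + β * r := calc
    (1 : ℝ) ≤ M / (β - 1) := (one_le_div (by linarith)).mpr (by linarith)
    _ = r + β * r := by
      rw [hr]
      field_simp [show β ^ 2 - 1 ≠ 0 by nlinarith, show β - 1 ≠ 0 by linarith]
      ring
  have hlower : -(β * r) ≤ -β * y := by nlinarith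
  have hupper : -β * y ≤ r + M := by nlinarith
  rcases le_or_gt (-β * y) r with hw | hw
  · refine ⟨(0 : ℤ), intCast_mem_digitSet le_rfl hM0, ?_, ?_⟩
    · simpa using hlower
    · simpa using hw
  · have hceil : ⌈-β * y - r⌉ ≤ M := Int.ceil_le.mpr (by linarith)
    refine ⟨⌈-β * y - r⌉, intCast_mem_digitSet (Int.ceil_nonneg (by linarith)) hceil, ?_, ?_⟩
    · linarith [Int.ceil_lt_add_one (-β * y - r)]
    · linarith [Int.le_ceil (-β * y - r)]

theorem Icc_subset_repSet_neg (hβ : 1 < β) (hM : β ≤ M + 1) (hr : r = M / (β ^ 2 - 1)) :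
    Set.Icc (-(β * r)) r ⊆ RepSet (-β) (digitSet M) :=
  subset_repSet_of_forall_exists_digit (by rwa [abs_neg, abs_of_pos (one_pos.trans hβ)])
    (Metric.isBounded_Icc _ _) fun _ => exists_digit_neg_mul_sub_mem_Icc hβ hM hr

end IntegerDigits

theorem abs_add_lt_abs_sub {y f d : ℝ} (hf : 0 < f) (hy : y < -f / 2) (hd : 0 ≤ d) :
    |y + f| < |y - d| := calc
  |y + f| < -y := abs_lt.mpr ⟨by linarith, by linarith⟩
  _ ≤ -(y - d) := by linarith
  _ ≤ |y - d| := neg_le_abs _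

/-- Case 2 of the proof of the main theorem: for `β > 1`, `β ∉ ℕ`,
`A = {0,…,⌊β⌋}`, `r = ⌊β⌋/(β²−1)`, `{β} = β − ⌊β⌋`, if `{β}/2 < r < 1/2`, then no
`x ∈ (−r/β, −{β}/(2β²))` has an optimal `(−β,A)`-representation. -/
theorem no_optimal_rep_on_interval_case2
    (β : ℝ) (hβ : 1 < β) (hβN : ∀ n : ℕ, β ≠ n)
    (r : ℝ) (hr : r = (⌊β⌋ : ℝ) / (β ^ 2 - 1))
    (hr1 : (β - ⌊β⌋) / 2 < r) (hr2 : r < 1 / 2) :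
    ∀ x ∈ Set.Ioo (-r / β) (-(β - ⌊β⌋) / (2 * β ^ 2)),
      ¬ ∃ c : ℕ → ℝ, IsOptimalRep (-β) (digitSet ⌊β⌋) c x := by
  rintro x ⟨hxr, hxf⟩ ⟨c, hc⟩
  have hβ0 : 0 < β := one_pos.trans hβ
  have hγ : -β ≠ 0 := neg_ne_zero.mpr hβ0.ne'
  have hM : 1 ≤ ⌊β⌋ := Int.le_floor.mpr (by exact_mod_cast hβ.le)
  have hfract : 0 < β - ⌊β⌋ := sub_pos.mpr <| (Int.floor_le β).lt_of_ne fun h =>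
    hβN ⌊β⌋₊ (by rw [natCast_floor_eq_intCast_floor hβ0.le, h])
  have hJ := Icc_subset_repSet_neg hβ (Int.lt_floor_add_one β).le hr
  have hlower : -r < β * x := by rwa [div_lt_iff₀' hβ0] at hxr
  have hupper : β ^ 2 * x < -(β - ⌊β⌋) / 2 := by
    rw [lt_div_iff₀ (by positivity)] at hxf
    linarith
  have hβx : β * x < 0 := by nlinarith
  have hc0 : c 0 = 0 := hc.head_eq_zero hγ (hJ ⟨by nlinarith, by linarith⟩)
    (abs_lt.mpr ⟨by linarith, by linarith⟩)
  have hremainder : -β * (-β * x - (1 : ℤ)) - ⌊β⌋ = β ^ 2 * x + (β - ⌊β⌋) := by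
    push_cast
    ring
  have hle := hc.abs_sub_two_digits_le hγ (intCast_mem_digitSet zero_le_one hM)
    (intCast_mem_digitSet (by omega) le_rfl) (hJ (hremainder ▸ ⟨by nlinarith, by linarith⟩))
  rw [hremainder, hc0, show -β * (-β * x - 0) = β ^ 2 * x by ring] at hle
  exact hle.not_gt (abs_add_lt_abs_sub hfract hupper (nonneg_of_mem_digitSet (hc.1.1 1)))
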